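/- Let A ⊆ F_p with 2 ≤ |A| < p^{1/2} and 0 ∉ A. Then max(|A+A|, |AA|) ≥ c·|A|^{14/13} / (log|A|)^α for absolute constants c > 0 and α ≥ 0. -/

import Mathlib

open Finset Pointwise

theorem sp_min {G : Type*} [AddCommGroup G] [DecidableEq G] (X B : Finset G) (hX : X.Nonempty) :
    ∃ U ⊆ X, U.Nonempty ∧ (∀ A' ⊆ U, (U + B).card * A'.card ≤ (A' + B).card * U.card) ∧
      (U + B).card * X.card ≤ (X + B).card * U.card := by
  have hX' : X ∈ X.powerset.erase ∅ := mem_erase_of_ne_of_mem hX.ne_empty (mem_powerset_self _)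
  obtain ⟨U, hU, hm⟩ :=
    exists_min_image (X.powerset.erase ∅) (fun C ↦ ((C + B).card / C.card : ℚ)) ⟨X, hX'⟩
  rw [mem_erase, mem_powerset, ← nonempty_iff_ne_empty] at hU
  have key : ∀ V ⊆ X, (U + B).card * V.card ≤ (V + B).card * U.card := by
    intro V hV
    obtain rfl | hV' := V.eq_empty_or_nonempty
    · simp
    have h := hm V (mem_erase_of_ne_of_mem hV'.ne_empty (mem_powerset.2 hV))
    have h1 : (0 : ℚ) < U.card := by exact_mod_cast hU.1.card_pos
    have h2 : (0 : ℚ) < V.card := by exact_mod_cast hV'.card_pos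
    rw [div_le_div_iff₀ h1 h2] at h
    exact_mod_cast h
  exact ⟨U, hU.2, hU.1, fun A' h => key A' (h.trans hU.2), key X subset_rfl⟩

theorem sp_two {G : Type*} [AddCommGroup G] [DecidableEq G] (X B C : Finset G)
    (hX : X.Nonempty) (hB : B.Nonempty) (hC : C.Nonempty) :
    ∃ U ⊆ X, U.Nonempty ∧
      (U + B + C).card * X.card ^ 2 ≤ 4 * (X + B).card * (X + C).card * U.card := by
  classical
  set s := (X + B).card with hs
  set t := (X + C).card with ht
  have hs0 : 0 < s := (hX.add hB).card_pos
  have ht0 : 0 < t := (hX.add hC).card_pos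
  set T : Finset (ℤ × ℤ) := (Finset.Ico 0 (t : ℤ)) ×ˢ {0} with hT
  set S : Finset (ℤ × ℤ) := {0} ×ˢ (Finset.Ico 0 (s : ℤ)) with hS
  have hTc : T.card = t := by simp [hT]
  have hSc : S.card = s := by simp [hS]
  have hTS : t * s ≤ (T + S).card := by
    have : (Finset.Ico 0 (t : ℤ)) ×ˢ (Finset.Ico 0 (s : ℤ)) ⊆ T + S := by
      rintro ⟨i, j⟩ hij
      rw [mem_product] at hij
      rw [mem_add]
      exact ⟨(i, 0), by simpa [hT] using hij.1, (0, j), by simpa [hS] using hij.2, by simp⟩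
    have h := card_le_card this
    simpa using h
  clear_value T S
  set Y : Finset (G × (ℤ × ℤ)) := X ×ˢ {0} with hY
  set D : Finset (G × (ℤ × ℤ)) := B ×ˢ T ∪ C ×ˢ S with hD
  obtain ⟨V, hVY, hV, hmin, hVX⟩ := sp_min Y D (hX.product (by simp))
  set U : Finset G := V.image Prod.fst with hU
  have hVU : V = U ×ˢ {0} := by
    ext ⟨g, z⟩
    simp only [hU, mem_product, mem_image, mem_singleton]
    constructor
    · intro h
      exact ⟨⟨_, h, rfl⟩, by simpa using (mem_product.1 (hVY h)).2⟩
    · rintro ⟨⟨⟨g', z'⟩, h, rfl⟩, rfl⟩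
      have : z' = 0 := by simpa using (mem_product.1 (hVY h)).2
      simpa [this] using h
  have hYc : Y.card = X.card := by simp [hY]
  have hVc : V.card = U.card := by rw [hVU]; simp
  have hUX : U ⊆ X := by
    intro g hg
    obtain ⟨⟨g', z⟩, h, rfl⟩ := mem_image.1 hg
    exact (mem_product.1 (hVY h)).1
  have hUn : U.Nonempty := hV.image _
  refine ⟨U, hUX, hUn, ?_⟩
  have hpet := pluennecke_petridis_inequality_add D hmin
  have hQ : (Y + D).card ≤ 2 * (s * t) := by
    rw [hD, add_union]
    refine (card_union_le _ _).trans ?_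
    rw [hY, product_add_product_comm, product_add_product_comm]
    simp only [singleton_zero, zero_add, card_product, hTc, hSc]
    rw [← hs, ← ht]
    apply le_of_eq; ring
  have hlow : (U + B + C).card * (t * s) ≤ (D + V + D).card := by
    have : (U + B + C) ×ˢ (T + S) ⊆ D + V + D := by
      have e : (U + B + C) ×ˢ (T + S) = B ×ˢ T + V + C ×ˢ S := by
        rw [hVU, product_add_product_comm, product_add_product_comm, add_comm B U]
        simp only [singleton_zero, add_zero]
      rw [e]
      exact add_subset_add (add_subset_add subset_union_left subset_rfl) subset_union_right
    have h := card_le_card this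
    rw [card_product] at h
    exact le_trans (Nat.mul_le_mul_left _ hTS) h
  rw [add_comm D V] at hpet hlow
  rw [hVc] at hpet hVX
  rw [hYc] at hVX
  have hU0 : 0 < U.card := hUn.card_pos
  set q := (V + D).card
  set w := (U + B + C).card
  have h1 : w * (t * s) * U.card ≤ q * q := le_trans (Nat.mul_le_mul_right _ hlow) hpet
  have h2 : q * X.card ≤ 2 * (s * t) * U.card := hVX.trans (Nat.mul_le_mul_right _ hQ)
  have h3 : (t * s * U.card) * (w * X.card ^ 2) ≤ (t * s * U.card) * (4 * s * t * U.card) := by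
    calc (t * s * U.card) * (w * X.card ^ 2) = (w * (t * s) * U.card) * X.card ^ 2 := by ring
      _ ≤ (q * q) * X.card ^ 2 := Nat.mul_le_mul_right _ h1
      _ = (q * X.card) * (q * X.card) := by ring
      _ ≤ (2 * (s * t) * U.card) * (2 * (s * t) * U.card) := Nat.mul_le_mul h2 h2
      _ = _ := by ring
  exact Nat.le_of_mul_le_mul_left h3 (Nat.mul_pos (Nat.mul_pos ht0 hs0) hU0)

theorem sp_fiber {α β : Type*} [DecidableEq α] [DecidableEq β] (s : Finset α) (f : α → β) :
    s.card ^ 2 ≤ (s.image f).card * ((s ×ˢ s).filter (fun q => f q.1 = f q.2)).card := by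
  have h1 : s.card = ∑ b ∈ s.image f, (s.filter (fun a => f a = b)).card :=
    card_eq_sum_card_image f s
  have h2 : ((s ×ˢ s).filter (fun q => f q.1 = f q.2)).card
      = ∑ b ∈ s.image f, (s.filter (fun a => f a = b)).card ^ 2 := by
    rw [card_eq_sum_card_fiberwise (f := fun q => f q.1) (t := s.image f)]
    · refine sum_congr rfl fun b _ => ?_
      rw [sq, ← card_product]
      congr 1
      ext ⟨x, y⟩
      simp only [mem_filter, mem_product]
      constructor
      · rintro ⟨⟨⟨h1, h2⟩, h3⟩, h4⟩
        exact ⟨⟨h1, h4⟩, h2, h3 ▸ h4⟩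
      · rintro ⟨⟨h1, h4⟩, h2, h3⟩
        exact ⟨⟨⟨h1, h2⟩, h4.trans h3.symm⟩, h4⟩
    · intro q hq
      simp only [coe_filter, mem_product, Set.mem_ofPred_eq] at hq
      exact mem_coe.2 (mem_image_of_mem _ hq.1.1)
  rw [h2]
  nth_rw 1 [h1]
  exact sq_sum_le_card_mul_sum_sq

theorem sp_exists_xi {F : Type*} [Field F] [Fintype F] [DecidableEq F] (A : Finset F)
    (hA : A.Nonempty) (hp : A.card ^ 2 ≤ Fintype.card F) :
    ∃ ξ : F, A.card ^ 2 ≤ 2 * (A + ξ • A).card := by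
  by_contra! hcon
  set s := A ×ˢ A with hs
  have hsc : s.card = A.card ^ 2 := by simp [hs, sq]
  have hs0 : 0 < s.card := by rw [hsc]; have := hA.card_pos; positivity
  let f : F → F × F → F := fun ξ q => q.1 + ξ * q.2
  let E : F → ℕ := fun ξ => ((s ×ˢ s).filter (fun q => f ξ q.1 = f ξ q.2)).card
  have him : ∀ ξ, (s.image (f ξ)).card ≤ (A + ξ • A).card := by
    intro ξ
    refine card_le_card ?_
    intro z hz
    obtain ⟨⟨x, y⟩, h, rfl⟩ := mem_image.1 hz
    rw [hs, mem_product] at h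
    exact add_mem_add h.1 (smul_mem_smul_finset h.2)
  have hE : ∀ ξ, 2 * s.card < E ξ := by
    intro ξ
    have h1 := sp_fiber s (f ξ)
    have h2 := hcon ξ
    rw [← hsc] at h2
    have h3 := him ξ
    change s.card ^ 2 ≤ _ * E ξ at h1
    by_contra! h4
    nlinarith
  have hsum : ∑ ξ, E ξ ≤ s.card * Fintype.card F + s.card ^ 2 := by
    have e : ∑ ξ, E ξ = ∑ q ∈ s ×ˢ s, (univ.filter (fun ξ => f ξ q.1 = f ξ q.2)).card := by
      simp only [E, card_filter]
      rw [sum_comm]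
    rw [e]
    calc ∑ q ∈ s ×ˢ s, (univ.filter (fun ξ => f ξ q.1 = f ξ q.2)).card
        ≤ ∑ q ∈ s ×ˢ s, ((if q.1 = q.2 then Fintype.card F else 0) + 1) := by
          refine sum_le_sum fun q _ => ?_
          split_ifs with h
          · exact (card_le_univ _).trans (Nat.le_succ _)
          · rw [zero_add, card_le_one]
            intro a ha b hb
            simp only [mem_filter, mem_univ, true_and, f] at ha hb
            by_contra hab
            have h2 : (a - b) * (q.1.2 - q.2.2) = 0 := by linear_combination ha - hb
            have h3 : q.1.2 = q.2.2 := by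
              rcases mul_eq_zero.1 h2 with h | h
              · exact absurd (sub_eq_zero.1 h) hab
              · exact sub_eq_zero.1 h
            apply h
            refine Prod.ext ?_ h3
            rw [h3] at ha
            exact add_right_cancel ha
      _ = s.card * Fintype.card F + s.card ^ 2 := by
          rw [sum_add_distrib, sum_product]
          simp [sq]
  have hlt : Fintype.card F * (2 * s.card) ≤ ∑ ξ, E ξ := by
    have := Finset.card_nsmul_le_sum univ E (2 * s.card) (fun ξ _ => (hE ξ).le)
    simpa using this
  have hlt2 : Fintype.card F * (2 * s.card + 1) ≤ ∑ ξ, E ξ := by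
    have := Finset.card_nsmul_le_sum univ E (2 * s.card + 1) (fun ξ _ => (hE ξ))
    simpa using this
  rw [← hsc] at hp
  have : 0 < Fintype.card F := Fintype.card_pos
  nlinarith

theorem sp_smul_add_le {F : Type*} [Field F] [DecidableEq F] (A Z : Finset F) (a : F)
    (hZ : Z ⊆ a • A) : (a • A + Z).card ≤ (A + A).card := by
  refine (card_le_card (?_ : a • A + Z ⊆ a • (A + A))).trans card_smul_finset_le
  intro z hz
  obtain ⟨x, hx, y, hy, rfl⟩ := mem_add.1 hz
  obtain ⟨x', hx', rfl⟩ := mem_smul_finset.1 hx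
  obtain ⟨y', hy', rfl⟩ := mem_smul_finset.1 (hZ hy)
  rw [← smul_add]
  exact smul_mem_smul_finset (add_mem_add hx' hy')

theorem sp_add {F : Type*} [Field F] [DecidableEq F] (A : Finset F) (a b : F) (N : ℕ)
    (hN : N ≤ (a • A ∩ b • A).card) : (b • A + a • A).card * N ≤ (A + A).card ^ 2 := by
  have h := ruzsa_triangle_inequality_add_add_add (b • A) (a • A ∩ b • A) (a • A)
  have h1 := sp_smul_add_le A (a • A ∩ b • A) b inter_subset_right
  have h2 := sp_smul_add_le A (a • A ∩ b • A) a inter_subset_left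
  rw [add_comm (a • A ∩ b • A) (a • A)] at h
  calc _ ≤ _ := Nat.mul_le_mul_left _ hN
    _ ≤ _ := h
    _ ≤ _ := Nat.mul_le_mul h1 h2
    _ = _ := (sq _).symm

theorem sp_sub {F : Type*} [Field F] [DecidableEq F] (A : Finset F) (a b : F) (N : ℕ)
    (hN : N ≤ (a • A ∩ b • A).card) : (b • A + -(a • A)).card * N ≤ (A + A).card ^ 2 := by
  have h := ruzsa_triangle_inequality_sub_add_add (b • A) (a • A ∩ b • A) (a • A)
  have h1 := sp_smul_add_le A (a • A ∩ b • A) b inter_subset_right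
  have h2 := sp_smul_add_le A (a • A ∩ b • A) a inter_subset_left
  rw [sub_eq_add_neg] at h
  calc _ ≤ _ := Nat.mul_le_mul_left _ hN
    _ ≤ _ := h
    _ ≤ _ := Nat.mul_le_mul h1 h2
    _ = _ := (sq _).symm

theorem sp_four {F : Type*} [Field F] [DecidableEq F] (A A₁ : Finset F) (b : F) (hb : b ≠ 0)
    (hA : A.Nonempty) (hsub : A₁ ⊆ A) (N : ℕ)
    (hN : ∀ a ∈ A₁, N ≤ (a • A ∩ b • A).card)
    (a₁ a₂ b₁ b₂ : F) (ha₁ : a₁ ∈ A₁) (ha₂ : a₂ ∈ A₁) (hb₁ : b₁ ∈ A₁) (hb₂ : b₂ ∈ A₁) :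
    ((b₁ - b₂) • A₁ + (a₁ - a₂) • A₁).card * N ^ 4 * A.card ^ 3 ≤ 256 * (A + A).card ^ 8 := by
  set B := ((a₁ • A) ∪ -(a₂ • A)) ∪ ((b₁ • A) ∪ -(b₂ • A)) with hB
  have hXc : (b • A).card = A.card := card_smul_finset₀ hb A
  have hXn : (b • A).Nonempty := by
    rw [← card_pos, hXc]; exact hA.card_pos
  have hsumm : (b • A + B).card * N ≤ 4 * (A + A).card ^ 2 := by
    have h1 := sp_add A a₁ b N (hN _ ha₁)
    have h2 := sp_sub A a₂ b N (hN _ ha₂)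
    have h3 := sp_add A b₁ b N (hN _ hb₁)
    have h4 := sp_sub A b₂ b N (hN _ hb₂)
    have h5 : (b • A + B).card ≤ ((b • A + a₁ • A).card + (b • A + -(a₂ • A)).card) +
        ((b • A + b₁ • A).card + (b • A + -(b₂ • A)).card) := by
      rw [hB, add_union, add_union, add_union]
      exact (card_union_le _ _).trans (Nat.add_le_add (card_union_le _ _) (card_union_le _ _))
    have h6 := Nat.mul_le_mul_right N h5
    linarith
  have hpl := pluennecke_ruzsa_inequality_nsmul_add hXn B 4
  rw [hXc] at hpl
  have hA0 : (0 : ℚ≥0) < A.card := by exact_mod_cast hA.card_pos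
  have hpl2 : (4 • B).card * A.card ^ 3 ≤ (b • A + B).card ^ 4 := by
    have : ((4 • B).card : ℚ≥0) * (A.card : ℚ≥0) ^ 3 ≤ ((b • A + B).card : ℚ≥0) ^ 4 := by
      calc ((4 • B).card : ℚ≥0) * (A.card : ℚ≥0) ^ 3
          ≤ (((b • A + B).card : ℚ≥0) / A.card) ^ 4 * A.card * (A.card : ℚ≥0) ^ 3 :=
            mul_le_mul_left hpl _
        _ = ((b • A + B).card : ℚ≥0) ^ 4 := by
            field_simp
    exact_mod_cast this
  have hsubset : (b₁ - b₂) • A₁ + (a₁ - a₂) • A₁ ⊆ 4 • B := by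
    intro z hz
    obtain ⟨x, hx, y, hy, rfl⟩ := mem_add.1 hz
    obtain ⟨x, hx', rfl⟩ := mem_smul_finset.1 hx
    obtain ⟨y, hy', rfl⟩ := mem_smul_finset.1 hy
    have hx := hsub hx'
    have hy := hsub hy'
    have e : (4 : ℕ) • B = B + B + B + B := by
      rw [show (4 : ℕ) = 1 + 1 + 1 + 1 from rfl, add_nsmul, add_nsmul, add_nsmul, one_nsmul]
    have e2 : (b₁ - b₂) • x + (a₁ - a₂) • y = b₁ • x + -(b₂ • x) + a₁ • y + -(a₂ • y) := by
      simp only [smul_eq_mul]; ring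
    rw [e, e2]
    refine add_mem_add (add_mem_add (add_mem_add ?_ ?_) ?_) ?_
    · exact mem_union_right _ (mem_union_left _ (smul_mem_smul_finset hx))
    · exact mem_union_right _ (mem_union_right _ (neg_mem_neg (smul_mem_smul_finset hx)))
    · exact mem_union_left _ (mem_union_left _ (smul_mem_smul_finset hy))
    · exact mem_union_left _ (mem_union_right _ (neg_mem_neg (smul_mem_smul_finset hy)))
  have hc := card_le_card hsubset
  calc ((b₁ - b₂) • A₁ + (a₁ - a₂) • A₁).card * N ^ 4 * A.card ^ 3
      ≤ (4 • B).card * N ^ 4 * A.card ^ 3 := by gcongr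
    _ = ((4 • B).card * A.card ^ 3) * N ^ 4 := by ring
    _ ≤ (b • A + B).card ^ 4 * N ^ 4 := Nat.mul_le_mul_right _ hpl2
    _ = ((b • A + B).card * N) ^ 4 := by ring
    _ ≤ (4 * (A + A).card ^ 2) ^ 4 := Nat.pow_le_pow_left hsumm 4
    _ = _ := by ring

theorem sp_quot {p : ℕ} [Fact p.Prime] (A : Finset (ZMod p)) (h2 : 2 ≤ A.card)
    (hp : A.card ^ 2 < p) :
    ∃ a₁ ∈ A, ∃ a₂ ∈ A, ∃ b₁ ∈ A, ∃ b₂ ∈ A,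
      A.card ^ 3 ≤ 4 * (A + A).card * ((b₁ - b₂) • A + (a₁ - a₂) • A).card := by
  have hA : A.Nonempty := card_pos.1 (by omega)
  let R : ZMod p → Prop := fun ξ => ∃ a₁ ∈ A, ∃ a₂ ∈ A, ∃ b₁ ∈ A, ∃ b₂ ∈ A,
    b₁ ≠ b₂ ∧ ξ * (b₁ - b₂) = a₁ - a₂
  suffices h : ∃ ξ, R ξ ∧ A.card ^ 3 ≤ 4 * (A + A).card * (A + ξ • A).card by
    obtain ⟨ξ, ⟨a₁, ha₁, a₂, ha₂, b₁, hb₁, b₂, hb₂, hne, hξ⟩, h⟩ := h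
    refine ⟨a₁, ha₁, a₂, ha₂, b₁, hb₁, b₂, hb₂, ?_⟩
    have hd : b₁ - b₂ ≠ 0 := sub_ne_zero.2 hne
    have e : (A + ξ • A).card ≤ ((b₁ - b₂) • A + (a₁ - a₂) • A).card := by
      rw [← card_smul_finset₀ hd]
      refine card_le_card ?_
      intro z hz
      obtain ⟨w, hw, rfl⟩ := mem_smul_finset.1 hz
      obtain ⟨x, hx, y, hy, rfl⟩ := mem_add.1 hw
      obtain ⟨y, hy', rfl⟩ := mem_smul_finset.1 hy
      have : (b₁ - b₂) • (x + ξ • y) = (b₁ - b₂) • x + (a₁ - a₂) • y := by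
        rw [← hξ]; simp only [smul_eq_mul]; ring
      rw [this]
      exact add_mem_add (smul_mem_smul_finset hx) (smul_mem_smul_finset hy')
    exact h.trans (Nat.mul_le_mul_left _ e)
  by_cases hall : ∀ ξ, R ξ
  · obtain ⟨ξ, hξ⟩ := sp_exists_xi A hA (by rw [ZMod.card]; exact hp.le)
    refine ⟨ξ, hall ξ, ?_⟩
    have h1 : A.card ≤ (A + A).card := card_le_card_add_right hA
    calc A.card ^ 3 = A.card * A.card ^ 2 := by ring
      _ ≤ (A + A).card * (2 * (A + ξ • A).card) := Nat.mul_le_mul h1 hξ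
      _ ≤ _ := by nlinarith [Nat.zero_le ((A + A).card * (A + ξ • A).card)]
  · have h0 : R 0 := by
      obtain ⟨x, hx, y, hy, hne⟩ := one_lt_card.1 h2
      exact ⟨x, hx, x, hx, x, hx, y, hy, hne, by simp⟩
    have : ∃ ξ, R ξ ∧ ¬ R (ξ + 1) := by
      by_contra! hc
      apply hall
      have hn : ∀ n : ℕ, R (n : ZMod p) := by
        intro n
        induction n with
        | zero => simpa using h0
        | succ k ih => push_cast; exact hc _ ih
      intro ξ
      have := hn ξ.val
      rwa [ZMod.natCast_zmod_val] at this
    obtain ⟨ξ, hξ, hξ1⟩ := this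
    refine ⟨ξ, hξ, ?_⟩
    obtain ⟨U, hUA, hU, hcard⟩ := sp_two A A (ξ • A) hA hA hA.smul_finset
    have hinj : U.card * A.card ≤ (U + A + ξ • A).card := by
      rw [← card_product]
      refine card_le_card_of_injOn (fun q => q.1 + q.2 + ξ • q.2) ?_ ?_
      · rintro ⟨x, y⟩ h
        have h := mem_product.1 (mem_coe.1 h)
        exact mem_coe.2 (add_mem_add (add_mem_add h.1 h.2) (smul_mem_smul_finset h.2))
      · rintro ⟨x, y⟩ h ⟨x', y'⟩ h' heq
        have h := mem_product.1 (mem_coe.1 h)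
        have h' := mem_product.1 (mem_coe.1 h')
        simp only [smul_eq_mul] at heq h h'
        have hy : y = y' := by
          by_contra hne
          exact hξ1 ⟨x', hUA h'.1, x, hUA h.1, y, h.2, y', h'.2, hne, by linear_combination heq⟩
        subst hy
        have : x = x' := by linear_combination heq
        rw [this]
    have hU0 := hU.card_pos
    have h3 : U.card * A.card ^ 3 ≤ U.card * (4 * (A + A).card * (A + ξ • A).card) := by
      calc U.card * A.card ^ 3 = (U.card * A.card) * A.card ^ 2 := by ring
        _ ≤ _ := Nat.mul_le_mul_right _ hinj
        _ ≤ _ := hcard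
        _ = _ := by ring
    exact Nat.le_of_mul_le_mul_left h3 hU0

theorem sp_main {p : ℕ} [Fact p.Prime] (A A₁ : Finset (ZMod p)) (b : ZMod p) (hb : b ≠ 0)
    (hA : A.Nonempty) (hp : A.card ^ 2 < p) (hsub : A₁ ⊆ A) (N : ℕ) (hNA : N ≤ A.card)
    (hN : ∀ a ∈ A₁, N ≤ (a • A ∩ b • A).card) :
    A₁.card ^ 3 * N ^ 4 * A.card ^ 3 ≤ 1024 * (A + A).card ^ 9 := by
  have h1 : A.card ≤ (A + A).card := card_le_card_add_right hA
  have h0 := hA.card_pos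
  by_cases h2 : 2 ≤ A₁.card
  · obtain ⟨a₁, ha₁, a₂, ha₂, b₁, hb₁, b₂, hb₂, h⟩ := sp_quot A₁ h2
      (lt_of_le_of_lt (Nat.pow_le_pow_left (card_le_card hsub) 2) hp)
    have h4 := sp_four A A₁ b hb hA hsub N hN a₁ a₂ b₁ b₂ ha₁ ha₂ hb₁ hb₂
    have hs : (A₁ + A₁).card ≤ (A + A).card := card_le_card (add_subset_add hsub hsub)
    set D := ((b₁ - b₂) • A₁ + (a₁ - a₂) • A₁).card
    calc A₁.card ^ 3 * N ^ 4 * A.card ^ 3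
        ≤ (4 * (A₁ + A₁).card * D) * N ^ 4 * A.card ^ 3 := by gcongr
      _ ≤ (4 * (A + A).card * D) * N ^ 4 * A.card ^ 3 := by gcongr
      _ = 4 * (A + A).card * (D * N ^ 4 * A.card ^ 3) := by ring
      _ ≤ 4 * (A + A).card * (256 * (A + A).card ^ 8) := Nat.mul_le_mul_left _ h4
      _ = _ := by ring
  · have h3 : A₁.card ≤ 1 := by omega
    calc A₁.card ^ 3 * N ^ 4 * A.card ^ 3
        ≤ 1 ^ 3 * (A + A).card ^ 4 * (A + A).card ^ 3 := by
          gcongr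
          exact hNA.trans h1
      _ = (A + A).card ^ 7 := by ring
      _ ≤ (A + A).card ^ 9 := Nat.pow_le_pow_right (by omega) (by norm_num)
      _ ≤ _ := by omega

theorem sp_pop {F : Type*} [Field F] [DecidableEq F] (A : Finset F) (hA : A.Nonempty)
    (h0 : (0 : F) ∉ A) :
    ∃ b ∈ A, A.card ^ 3 ≤ (A * A).card * ∑ a ∈ A, (a • A ∩ b • A).card := by
  have hE := le_card_mul_mul_mulEnergy A A
  have hE2 : mulEnergy A A ≤ ∑ b ∈ A, ∑ a ∈ A, (a • A ∩ b • A).card := by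
    rw [mulEnergy, card_filter, sum_product, sum_product_right]
    refine sum_le_sum fun b hb => sum_le_sum fun a ha => ?_
    rw [← card_filter]
    have ha0 : a ≠ 0 := fun h => h0 (h ▸ ha)
    have hb0 : b ≠ 0 := fun h => h0 (h ▸ hb)
    refine card_le_card_of_injOn (fun q => a • q.1) ?_ ?_
    · rintro ⟨x, y⟩ h
      simp only [coe_filter, mem_product, Set.mem_ofPred_eq] at h
      refine mem_coe.2 (mem_inter.2 ⟨smul_mem_smul_finset h.1.1, ?_⟩)
      have : a • x = b • y := h.2
      simp only [this]
      exact smul_mem_smul_finset h.1.2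
    · rintro ⟨x, y⟩ h ⟨x', y'⟩ h' heq
      simp only [coe_filter, mem_product, Set.mem_ofPred_eq] at h h'
      have hx : x = x' := mul_left_cancel₀ ha0 heq
      subst hx
      have hy : y = y' := mul_left_cancel₀ hb0 (h.2.symm.trans h'.2)
      rw [hy]
  by_contra! hc
  have h3 : ∑ b ∈ A, (A * A).card * ∑ a ∈ A, (a • A ∩ b • A).card < ∑ b ∈ A, A.card ^ 3 :=
    sum_lt_sum_of_nonempty hA hc
  rw [← mul_sum, sum_const, smul_eq_mul] at h3
  have h4 := Nat.mul_le_mul_left (A * A).card hE2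
  nlinarith

theorem sp_layer {α : Type*} [DecidableEq α] (s : Finset α) (f : α → ℕ) (n : ℕ) (hn : 1 ≤ n)
    (hf : ∀ a ∈ s, f a ≤ n) :
    ∃ N ≤ n, ((∑ a ∈ s, f a : ℕ) : ℝ) ≤
      N * (s.filter (fun a => N ≤ f a)).card * (1 + Real.log n) := by
  by_contra! hc
  have hL : 0 < 1 + Real.log n := by
    have := Real.log_nonneg (by exact_mod_cast hn : (1 : ℝ) ≤ n)
    linarith
  set M : ℝ := ((∑ a ∈ s, f a : ℕ) : ℝ) with hM
  have hM0 : 0 < M := by simpa using hc 0 (Nat.zero_le _)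
  have e : ∑ a ∈ s, f a = ∑ i ∈ range n, (s.filter (fun a => i + 1 ≤ f a)).card := by
    simp only [card_filter]
    rw [sum_comm]
    refine sum_congr rfl fun a ha => ?_
    rw [← card_filter]
    have : (range n).filter (fun i => i + 1 ≤ f a) = range (f a) := by
      ext i
      have := hf a ha
      simp only [mem_filter, mem_range]
      omega
    rw [this, card_range]
  have hlt : M < ∑ i ∈ range n, M / (1 + Real.log n) * ((i + 1 : ℝ))⁻¹ := by
    have hM' : M = ∑ i ∈ range n, ((s.filter (fun a => i + 1 ≤ f a)).card : ℝ) := by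
      rw [hM, e, Nat.cast_sum]
    refine hM'.trans_lt ?_
    refine sum_lt_sum_of_nonempty (by simpa using by omega) fun i hi => ?_
    have h := hc (i + 1) (by have := mem_range.1 hi; omega)
    have hi0 : (0 : ℝ) < i + 1 := by positivity
    rw [← div_eq_mul_inv, lt_div_iff₀ hi0, lt_div_iff₀ hL]
    push_cast at h
    linarith
  have hh := harmonic_le_one_add_log n
  rw [← mul_sum] at hlt
  have hh2 : ∑ i ∈ range n, ((i + 1 : ℝ))⁻¹ ≤ 1 + Real.log n := by
    simpa [harmonic] using hh
  have : M / (1 + Real.log n) * ∑ i ∈ range n, ((i + 1 : ℝ))⁻¹ ≤ M := by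
    calc _ ≤ M / (1 + Real.log n) * (1 + Real.log n) := by gcongr
      _ = M := by field_simp
  linarith

theorem sum_product_14_13 :
    ∃ c : ℝ, 0 < c ∧ ∃ α : ℝ, 0 ≤ α ∧
      ∀ (p : ℕ), p.Prime → ∀ (A : Finset (ZMod p)),
        2 ≤ A.card → A.card ^ 2 < p → (0 : ZMod p) ∉ A →
        c * (A.card : ℝ) ^ ((14 : ℝ) / 13) / (Real.log A.card) ^ α ≤
          max ((A + A).card : ℝ) ((A * A).card : ℝ) := by
  refine ⟨1 / 4, by norm_num, 4 / 13, by norm_num, ?_⟩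
  intro p hpp A h2 hp h0
  have : Fact p.Prime := ⟨hpp⟩
  have hA : A.Nonempty := card_pos.1 (by omega)
  obtain ⟨b, hb, hpop⟩ := sp_pop A hA h0
  have hb0 : b ≠ 0 := fun h => h0 (h ▸ hb)
  obtain ⟨N, hNn, hlay⟩ := sp_layer A (fun a => (a • A ∩ b • A).card) A.card (by omega)
    (fun a _ => (card_le_card inter_subset_left).trans card_smul_finset_le)
  set A₁ := A.filter (fun a => N ≤ (a • A ∩ b • A).card) with hA₁
  have hmain := sp_main A A₁ b hb0 hA hp (filter_subset _ _) N hNn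
    (fun a ha => (mem_filter.1 ha).2)
  have hm : A₁.card ≤ A.card := card_le_card (filter_subset _ _)
  set M := ∑ a ∈ A, (a • A ∩ b • A).card
  set x : ℝ := max ((A + A).card : ℝ) ((A * A).card : ℝ) with hx
  have hS : ((A + A).card : ℝ) ≤ x := le_max_left _ _
  have hP : ((A * A).card : ℝ) ≤ x := le_max_right _ _
  have hx0 : 0 ≤ x := le_trans (Nat.cast_nonneg _) hS
  have hn2 : (2 : ℝ) ≤ A.card := by exact_mod_cast h2
  have hl2 : Real.log 2 ≤ Real.log A.card := Real.log_le_log (by norm_num) hn2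
  have hl3 := Real.log_two_gt_d9
  set n : ℝ := (A.card : ℝ) with hn
  set l := Real.log n with hl
  have hl0 : 0 < l := by linarith
  have hL : 1 + l ≤ 3 * l := by linarith
  have hpop' : n ^ 3 ≤ x * M := by
    have : n ^ 3 ≤ ((A * A).card : ℝ) * M := by rw [hn]; exact_mod_cast hpop
    exact this.trans (mul_le_mul_of_nonneg_right hP (Nat.cast_nonneg _))
  have hmain' : (A₁.card : ℝ) ^ 3 * (N : ℝ) ^ 4 * n ^ 3 ≤ 1024 * x ^ 9 := by
    have : (A₁.card : ℝ) ^ 3 * (N : ℝ) ^ 4 * n ^ 3 ≤ 1024 * ((A + A).card : ℝ) ^ 9 := by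
      rw [hn]; exact_mod_cast hmain
    refine this.trans ?_
    gcongr
  have hm' : (A₁.card : ℝ) ≤ n := by rw [hn]; exact_mod_cast hm
  set m : ℝ := (A₁.card : ℝ)
  have hm0 : 0 ≤ m := Nat.cast_nonneg _
  have hN0 : (0 : ℝ) ≤ N := Nat.cast_nonneg _
  have hlay' : (M : ℝ) ≤ N * m * (3 * l) := hlay.trans (by gcongr)
  have hfin : n ^ 14 ≤ 82944 * l ^ 4 * x ^ 13 := by
    calc n ^ 14 = (n ^ 3) ^ 4 * n ^ 2 := by ring
      _ ≤ (x * (N * m * (3 * l))) ^ 4 * n ^ 2 := by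
          gcongr
          exact hpop'.trans (by gcongr)
      _ = 81 * x ^ 4 * l ^ 4 * N ^ 4 * m ^ 3 * n ^ 2 * m := by ring
      _ ≤ 81 * x ^ 4 * l ^ 4 * N ^ 4 * m ^ 3 * n ^ 2 * n := by gcongr
      _ = 81 * x ^ 4 * l ^ 4 * (m ^ 3 * N ^ 4 * n ^ 3) := by ring
      _ ≤ 81 * x ^ 4 * l ^ 4 * (1024 * x ^ 9) := by gcongr
      _ = _ := by ring
  have hn0 : 0 < n := by linarith
  refine le_of_pow_le_pow_left₀ (n := 13) (by norm_num) hx0 ?_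
  rw [div_pow, mul_pow, ← Real.rpow_mul_natCast hn0.le, ← Real.rpow_mul_natCast hl0.le]
  have e1 : n ^ ((14 : ℝ) / 13 * ((13 : ℕ) : ℝ)) = n ^ 14 := by
    rw [show (14 : ℝ) / 13 * ((13 : ℕ) : ℝ) = ((14 : ℕ) : ℝ) by norm_num, Real.rpow_natCast]
  have e2 : l ^ ((4 : ℝ) / 13 * ((13 : ℕ) : ℝ)) = l ^ 4 := by
    rw [show (4 : ℝ) / 13 * ((13 : ℕ) : ℝ) = ((4 : ℕ) : ℝ) by norm_num, Real.rpow_natCast]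
  rw [e1, e2, div_le_iff₀ (by positivity)]
  have : 0 ≤ l ^ 4 * x ^ 13 := by positivity
  norm_num
  nlinarith
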